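/- Let n be a natural number and let s be the outmap of a unique sink orientation (USO) of the n-dimensional hypercube. Then the sequence k ↦ s^[k](∅) is periodic: there exists l with 1 ≤ l ≤ 2^n such that s^[k+l](∅) = s^[k](∅) for every natural number k. -/

import Mathlib

/-- An outmap `s` is the outmap of an orientation of the `n`-cube if for every
vertex `v` and every direction `lam`, the `lam`-edge at `v` is outgoing at `v`
iff it is incoming at the neighbor `v Δ {lam}`. -/
def IsOrientation (n : ℕ) (s : Finset (Fin n) → Finset (Fin n)) : Prop :=
  ∀ (v : Finset (Fin n)) (lam : Fin n), lam ∈ s v ↔ lam ∉ s (symmDiff v {lam})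

/-- An outmap `s` is a unique sink orientation (USO) of the `n`-cube if it is
the outmap of an orientation and every subcube `[u : w]` has a unique sink. -/
def IsUSO (n : ℕ) (s : Finset (Fin n) → Finset (Fin n)) : Prop :=
  IsOrientation n s ∧
    ∀ u w : Finset (Fin n), u ⊆ w →
      ∃! x : Finset (Fin n), u ⊆ x ∧ x ⊆ w ∧ s x ∩ (w \ u) = ∅

/-!
Reversing all edges in one direction `a` preserves unique sinks: a face containing direction `a`
splits into two facets, exactly one of whose sinks is the sink of the whole face, and after the
reversal it is the other one. Hence edges in any finite set of directions may be reversed. If the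
outmap values at `x` and `y` agree on `x ∆ y`, then reversing the directions in `s x` makes both
`x` and `y` sinks of the smallest face containing them, so `x = y`. Thus `s` is injective, and an
injective self-map of a finite set has only periodic points.
-/

open Finset Function
open scoped symmDiff

theorem existsUnique_and_eq_or_eq_iff_xor {β : Type*} {p : β → Prop} {y z : β} (hyz : y ≠ z) :
    (∃! x, p x ∧ (x = y ∨ x = z)) ↔ Xor (p y) (p z) := by
  constructor
  · rintro ⟨x, ⟨hx, rfl | rfl⟩, unique⟩
    · exact .inl ⟨hx, fun hz ↦ hyz (unique z ⟨hz, .inr rfl⟩).symm⟩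
    · exact .inr ⟨hx, fun hy ↦ hyz (unique y ⟨hy, .inl rfl⟩)⟩
  · rintro (⟨hy, hz⟩ | ⟨hz, hy⟩)
    · exact ⟨y, ⟨hy, .inl rfl⟩, by rintro x ⟨hx, rfl | rfl⟩ <;> trivial⟩
    · exact ⟨z, ⟨hz, .inr rfl⟩, by rintro x ⟨hx, rfl | rfl⟩ <;> trivial⟩

variable {α : Type*} [DecidableEq α] {s : Finset α → Finset α} {u w x y : Finset α} {a : α}

/-- `x` is a sink of the face `[u, w]` of the cube on `α` under the outmap `s`: it lies in that
face, and none of its outgoing edges does. -/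
def IsSink (s : Finset α → Finset α) (u w x : Finset α) : Prop :=
  u ⊆ x ∧ x ⊆ w ∧ Disjoint (s x) (w \ u)

/-- The unique sink property of an outmap on the finite subsets of an arbitrary type. That `s`
orients every edge consistently is the case of one-dimensional faces. -/
def HasUniqueSinks (s : Finset α → Finset α) : Prop :=
  ∀ ⦃u w : Finset α⦄, u ⊆ w → ∃! x, IsSink s u w x

theorem IsUSO.hasUniqueSinks {n : ℕ} {s : Finset (Fin n) → Finset (Fin n)} (hs : IsUSO n s) :
    HasUniqueSinks s := by
  simpa only [HasUniqueSinks, IsSink, disjoint_iff_inter_eq_empty] using hs.2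

theorem isSink_symmDiff_singleton_iff_of_notMem (ha : a ∉ w \ u) :
    IsSink (fun v ↦ s v ∆ {a}) u w x ↔ IsSink s u w x := by
  simp only [IsSink, disjoint_left, mem_symmDiff, mem_singleton]
  grind

theorem isSink_iff_isSink_facet (ha : a ∈ w \ u) :
    IsSink s u w x ↔
      a ∉ s x ∧ (IsSink s u (w.erase a) x ∨ IsSink s (insert a u) w x) := by
  simp only [IsSink, disjoint_left]
  grind

theorem isSink_symmDiff_singleton_iff_isSink_facet (ha : a ∈ w \ u) :
    IsSink (fun v ↦ s v ∆ {a}) u w x ↔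
      a ∈ s x ∧ (IsSink s u (w.erase a) x ∨ IsSink s (insert a u) w x) := by
  have a_notMem_lower : a ∉ w.erase a \ u := by simp
  have a_notMem_upper : a ∉ w \ insert a u := by simp
  rw [isSink_iff_isSink_facet ha, isSink_symmDiff_singleton_iff_of_notMem a_notMem_lower,
    isSink_symmDiff_singleton_iff_of_notMem a_notMem_upper]
  simp [mem_symmDiff]

namespace HasUniqueSinks

theorem symmDiff_singleton (hs : HasUniqueSinks s) (a : α) :
    HasUniqueSinks (fun v ↦ s v ∆ {a}) := by
  intro u w huw
  by_cases ha : a ∈ w \ u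
  · obtain ⟨haw, hau⟩ := mem_sdiff.1 ha
    obtain ⟨lower, hlower, lower_unique⟩ := hs (subset_erase.2 ⟨huw, hau⟩)
    obtain ⟨upper, hupper, upper_unique⟩ := hs (insert_subset haw huw)
    have facet_sink_iff (x : Finset α) :
        IsSink s u (w.erase a) x ∨ IsSink s (insert a u) w x ↔ x = lower ∨ x = upper :=
      or_congr ⟨lower_unique x, fun h ↦ h ▸ hlower⟩ ⟨upper_unique x, fun h ↦ h ▸ hupper⟩
    have lower_ne_upper : lower ≠ upper := by
      rintro rfl
      exact notMem_erase a w (hlower.2.1 (hupper.1 (mem_insert_self a u)))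
    have one_facet_sink_is_sink : Xor (a ∉ s lower) (a ∉ s upper) := by
      simpa only [isSink_iff_isSink_facet ha, facet_sink_iff,
        existsUnique_and_eq_or_eq_iff_xor lower_ne_upper] using hs huw
    simpa only [isSink_symmDiff_singleton_iff_isSink_facet ha, facet_sink_iff,
      existsUnique_and_eq_or_eq_iff_xor lower_ne_upper] using xor_not_not.1 one_facet_sink_is_sink
  · simpa only [isSink_symmDiff_singleton_iff_of_notMem ha] using hs huw

theorem symmDiff_const (hs : HasUniqueSinks s) (A : Finset α) :
    HasUniqueSinks (fun v ↦ s v ∆ A) := by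
  induction A using Finset.induction_on with
  | empty => simpa only [← bot_eq_empty, symmDiff_bot] using hs
  | insert a A ha ih =>
    have insert_eq_symmDiff : insert a A = A ∆ {a} := by
      rw [symmDiff_eq_union (disjoint_singleton_right.2 ha), union_singleton]
    simpa only [insert_eq_symmDiff, symmDiff_assoc] using ih.symmDiff_singleton a

theorem eq_of_disjoint_symmDiff (hs : HasUniqueSinks s) (hxy : Disjoint (s x ∆ s y) (x ∆ y)) :
    x = y := by
  have face_directions : (x ∪ y) \ (x ∩ y) = x ∆ y := (symmDiff_eq_sup_sdiff_inf x y).symm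
  have hx : IsSink (fun v ↦ s v ∆ s x) (x ∩ y) (x ∪ y) x :=
    ⟨inter_subset_left, subset_union_left, by simp⟩
  have hy : IsSink (fun v ↦ s v ∆ s x) (x ∩ y) (x ∪ y) y :=
    ⟨inter_subset_right, subset_union_right, by
      simpa only [face_directions, symmDiff_comm (s y) (s x)] using hxy⟩
  exact (hs.symmDiff_const (s x) inter_subset_union).unique hx hy

theorem injective (hs : HasUniqueSinks s) : Injective s :=
  fun x y hxy ↦ hs.eq_of_disjoint_symmDiff (by simp [hxy])

end HasUniqueSinks

theorem uso_iterate_periodic_general [Fintype α] (hs : HasUniqueSinks s) (v : Finset α) :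
    ∃ l : ℕ, 1 ≤ l ∧ l ≤ 2 ^ Fintype.card α ∧ ∀ k : ℕ, s^[k + l] v = s^[k] v :=
  ⟨minimalPeriod s v, minimalPeriod_pos_of_mem_periodicPts (hs.injective.mem_periodicPts v),
    Fintype.card_finset (α := α) ▸ minimalPeriod_le_card, fun _ ↦ iterate_add_minimalPeriod_eq⟩

/-- The sequence k ↦ s^[k](∅) of iterates of a USO outmap is periodic, with a
period l between 1 and 2^n. -/
theorem uso_iterate_periodic (n : ℕ)
    (s : Finset (Fin n) → Finset (Fin n)) (hs : IsUSO n s) :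
    ∃ l : ℕ, 1 ≤ l ∧ l ≤ 2 ^ n ∧ ∀ k : ℕ, s^[k + l] ∅ = s^[k] ∅ := by
  simpa only [Fintype.card_fin] using uso_iterate_periodic_general hs.hasUniqueSinks ∅
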